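/- arXiv:0712.1014 — 2 statements merged into one kernel-verified Lean document; each statement's English description precedes it below -/
import Mathlib

section
/- Let G be a finite simple graph without isolated vertices with β(G)/α(G) = 5/4 (i.e., 4·β(G) = 5·α(G)), and let F be any spanning S-forest of G. Suppose u is a vertex of degree 1 in F, w is the base of u, and (u, w) is an edge of G (not in F). Then the vertex v of degree 2 in F that is adjacent to u in F is incident to no edge from B(G, F); equivalently, every edge of G incident to v belongs to F, so v has degree 2 in G. -/
open SimpleGraph

/-- A matching of `G`, given as a finite set of edges of `G` that are pairwise non-adjacent. -/
def IsMatchingE {V : Type*} (G : SimpleGraph V) (M : Finset (Sym2 V)) : Prop :=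
  ↑M ⊆ G.edgeSet ∧ ∀ e ∈ M, ∀ f ∈ M, e ≠ f → ∀ v : V, ¬(v ∈ e ∧ v ∈ f)

/-- A vertex is covered by a set of edges if some edge of it is incident to the vertex. -/
def Covers {V : Type*} (M : Finset (Sym2 V)) (v : V) : Prop := ∃ e ∈ M, v ∈ e

/-- `β(G)`: the maximum size of a matching of `G`. -/
noncomputable def gBeta {V : Type*} (G : SimpleGraph V) : ℕ :=
  sSup {n | ∃ M : Finset (Sym2 V), IsMatchingE G M ∧ M.card = n}

/-- `λ(G)`: the maximum of `|H| + |H'|` over pairs `(H, H')` of disjoint matchings of `G`. -/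
noncomputable def gLam {V : Type*} (G : SimpleGraph V) : ℕ :=
  sSup {n | ∃ H H' : Finset (Sym2 V), IsMatchingE G H ∧ IsMatchingE G H' ∧
    Disjoint H H' ∧ H.card + H'.card = n}

/-- `α(G)`: the maximum of `|H|` over pairs `(H, H')` of disjoint matchings of `G`
with `|H| + |H'| = λ(G)`. -/
noncomputable def gAlpha {V : Type*} (G : SimpleGraph V) : ℕ :=
  sSup {n | ∃ H H' : Finset (Sym2 V), IsMatchingE G H ∧ IsMatchingE G H' ∧
    Disjoint H H' ∧ H.card + H'.card = gLam G ∧ H.card = n}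

/-- `β₁(G)`: the maximum of `β(G \ F)` over maximum matchings `F` of `G`. -/
noncomputable def gBeta1 {V : Type*} (G : SimpleGraph V) : ℕ :=
  sSup {n | ∃ F : Finset (Sym2 V), IsMatchingE G F ∧ F.card = gBeta G ∧
    gBeta (G.deleteEdges ↑F) = n}

/-- Membership in `M₂(G)`: `(H, H')` is a pair of disjoint matchings of `G` with
`|H| + |H'| = λ(G)` and `|H| = α(G)`. -/
def InM2 {V : Type*} (G : SimpleGraph V) (H H' : Finset (Sym2 V)) : Prop :=
  IsMatchingE G H ∧ IsMatchingE G H' ∧ Disjoint H H' ∧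
  H.card + H'.card = gLam G ∧ H.card = gAlpha G

/-- Membership in `M₂(G, M)`: pairs from `M₂(G)` maximizing `|M ∩ (H ∪ H')|`. -/
def InM2M {V : Type*} [DecidableEq V] (G : SimpleGraph V) (M H H' : Finset (Sym2 V)) : Prop :=
  InM2 G H H' ∧ ∀ K K' : Finset (Sym2 V), InM2 G K K' →
    (M ∩ (K ∪ K')).card ≤ (M ∩ (H ∪ H')).card

/-- The degree of a vertex `v` in the graph `F`. -/
noncomputable def fdeg {V : Type*} (F : SimpleGraph V) (v : V) : ℕ := (F.neighborSet v).ncard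

/-- The spanner: two paths `a₁a₂a₃a₄a₅` and `b₁b₂b₃b₄b₅` joined by the edge `a₃b₃`.
Vertices `0..4` are `a₁..a₅` and `5..9` are `b₁..b₅`. -/
def Spanner10 : SimpleGraph (Fin 10) :=
  SimpleGraph.fromEdgeSet
    {s(0, 1), s(1, 2), s(2, 3), s(3, 4), s(5, 6), s(6, 7), s(7, 8), s(8, 9), s(2, 7)}

/-- An S-forest: every connected component is isomorphic to the spanner. -/
def IsSForest {V : Type*} (F : SimpleGraph V) : Prop :=
  ∀ c : F.ConnectedComponent, Nonempty ((F.induce c.supp) ≃g Spanner10)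

/-- `U(F)`: edges of `F` incident to a vertex of degree 1. -/
def USet {V : Type*} (F : SimpleGraph V) : Set (Sym2 V) :=
  {e | e ∈ F.edgeSet ∧ ∃ v ∈ e, fdeg F v = 1}

/-- `L(F)`: edges of `F` not in `U(F)` incident to a vertex of degree 2. -/
def LSet {V : Type*} (F : SimpleGraph V) : Set (Sym2 V) :=
  {e | e ∈ F.edgeSet ∧ e ∉ USet F ∧ ∃ v ∈ e, fdeg F v = 2}

/-- `w` is the base of the 1-vertex `u` of `F`: a 3-vertex at `F`-distance 2 from `u`. -/
def IsBase {V : Type*} (F : SimpleGraph V) (u w : V) : Prop :=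
  fdeg F w = 3 ∧ F.dist u w = 2

/-- `Δ(G, F)`: edges of `G` joining a 1-vertex of `F` to its base. -/
def DeltaSet {V : Type*} (G F : SimpleGraph V) : Set (Sym2 V) :=
  {e | e ∈ G.edgeSet ∧ ∃ u w : V, e = s(u, w) ∧ fdeg F u = 1 ∧ IsBase F u w}

/-- `B(G, F) = E(G) \ (U(F) ∪ L(F) ∪ Δ(G, F))`. -/
def BSet {V : Type*} (G F : SimpleGraph V) : Set (Sym2 V) :=
  G.edgeSet \ (USet F ∪ LSet F ∪ DeltaSet G F)

/-- Condition (a): no 1-vertex of `F` is incident to an edge from `B(G, F)`. -/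
def CondA {V : Type*} (G F : SimpleGraph V) : Prop :=
  ∀ v : V, fdeg F v = 1 → ∀ e ∈ BSet G F, v ∉ e

/-- Condition (b): if a 1-vertex `u` of `F` is incident to an edge from `Δ(G, F)`, then
the 2-vertex of `F` adjacent to `u` in `F` is not incident to any edge from `B(G, F)`. -/
def CondB {V : Type*} (G F : SimpleGraph V) : Prop :=
  ∀ u v : V, fdeg F u = 1 → (∃ e ∈ DeltaSet G F, u ∈ e) →
    F.Adj u v → fdeg F v = 2 → ∀ e ∈ BSet G F, v ∉ e

/-- Condition (c): for every `L(F)`-`B(G, F)` alternating even closed trail of `G`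
containing an edge joining two 2-vertices of `F`, the graph formed by its edges belonging
to `B(G, F)` is not bipartite (2-colorable). -/
def CondC {V : Type*} (G F : SimpleGraph V) : Prop :=
  ∀ (n : ℕ) (e : ℕ → Sym2 V),
    1 ≤ n →
    (∀ i j, i < 2 * n → j < 2 * n → e i = e j → i = j) →
    (∀ i, i < 2 * n → e i ∈ G.edgeSet) →
    (∀ i, i + 1 < 2 * n → ∃ v : V, v ∈ e i ∧ v ∈ e (i + 1)) →
    (∃ v : V, v ∈ e (2 * n - 1) ∧ v ∈ e 0) →
    (∀ i, i < 2 * n → (i % 2 = 0 → e i ∈ LSet F) ∧ (i % 2 = 1 → e i ∈ BSet G F)) →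
    (∃ i, i < 2 * n ∧ ∀ v ∈ e i, fdeg F v = 2) →
    ¬ (SimpleGraph.fromEdgeSet {f | ∃ i, i < 2 * n ∧ f = e i ∧ f ∈ BSet G F}).Colorable 2

/-- Decidable version of adjacency in the spanner. -/
def spEdges : Finset (Sym2 (Fin 10)) :=
  {s(0, 1), s(1, 2), s(2, 3), s(3, 4), s(5, 6), s(6, 7), s(7, 8), s(8, 9), s(2, 7)}

lemma spanner_adj (i j : Fin 10) : Spanner10.Adj i j ↔ s(i, j) ∈ spEdges := by
  have h : ∀ i j : Fin 10, s(i, j) ∈ spEdges → i ≠ j := by decide +kernel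
  have h2 : s(i, j) ∈ spEdges ↔ s(i, j) ∈ ({s(0, 1), s(1, 2), s(2, 3), s(3, 4), s(5, 6),
      s(6, 7), s(7, 8), s(8, 9), s(2, 7)} : Set (Sym2 (Fin 10))) := by
    simp only [spEdges, Finset.mem_insert, Finset.mem_singleton, Set.mem_insert_iff,
      Set.mem_singleton_iff]
  unfold Spanner10
  rw [SimpleGraph.fromEdgeSet_adj, ← h2]
  exact ⟨fun a => a.1, fun a => ⟨a, h i j a⟩⟩

/-- A labelling of a component by the spanner's vertices. -/
structure Lab {V : Type*} (F : SimpleGraph V) (c : F.ConnectedComponent) (g : Fin 10 → V) :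
    Prop where
  inj : Function.Injective g
  comp : ∀ i, F.connectedComponentMk (g i) = c
  adj : ∀ i j, F.Adj (g i) (g j) ↔ s(i, j) ∈ spEdges
  surj : ∀ v, F.connectedComponentMk v = c → ∃ i, g i = v

lemma exists_lab {V : Type*} {F : SimpleGraph V} (hF : IsSForest F) (c : F.ConnectedComponent) :
    ∃ g, Lab F c g := by
  obtain ⟨φ⟩ := hF c
  refine ⟨fun i => (φ.symm i).1, ?_, ?_, ?_, ?_⟩
  · intro i j h
    exact φ.symm.injective (Subtype.ext h)
  · intro i
    exact (φ.symm i).2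
  · intro i j
    rw [← spanner_adj, ← φ.symm.map_adj_iff]
    rfl
  · intro v hv
    exact ⟨φ ⟨v, hv⟩, by simp⟩

lemma Lab.perm {V : Type*} {F : SimpleGraph V} {c : F.ConnectedComponent} {g : Fin 10 → V}
    (h : Lab F c g) (σ : Equiv.Perm (Fin 10))
    (hσ : ∀ i j, s(σ i, σ j) ∈ spEdges ↔ s(i, j) ∈ spEdges) : Lab F c (g ∘ σ) where
  inj := h.inj.comp σ.injective
  comp i := h.comp _
  adj i j := by simp only [Function.comp]; rw [h.adj, hσ]
  surj v hv := by
    obtain ⟨i, hi⟩ := h.surj v hv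
    exact ⟨σ.symm i, by simpa using hi⟩

/-- Reversal of the first path. -/
def permRev : Equiv.Perm (Fin 10) :=
  ⟨![4, 3, 2, 1, 0, 5, 6, 7, 8, 9], ![4, 3, 2, 1, 0, 5, 6, 7, 8, 9], by decide, by decide⟩

/-- Exchange of the two paths. -/
def permSwap : Equiv.Perm (Fin 10) :=
  ⟨![5, 6, 7, 8, 9, 0, 1, 2, 3, 4], ![5, 6, 7, 8, 9, 0, 1, 2, 3, 4], by decide, by decide⟩

lemma exists_lab_at {V : Type*} {F : SimpleGraph V} (hF : IsSForest F) (x : V) :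
    ∃ g, Lab F (F.connectedComponentMk x) g ∧ (g 0 = x ∨ g 1 = x ∨ g 2 = x) := by
  obtain ⟨g, hg⟩ := exists_lab hF (F.connectedComponentMk x)
  obtain ⟨i, hi⟩ := hg.surj x rfl
  have hr : ∀ i j, s(permRev i, permRev j) ∈ spEdges ↔ s(i, j) ∈ spEdges := by decide +kernel
  have hs : ∀ i j, s(permSwap i, permSwap j) ∈ spEdges ↔ s(i, j) ∈ spEdges := by decide +kernel
  have key : ∀ i : Fin 10, (i = 0 ∨ i = 1 ∨ i = 2) ∨
      (permRev 0 = i ∨ permRev 1 = i ∨ permRev 2 = i) ∨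
      (permSwap 0 = i ∨ permSwap 1 = i ∨ permSwap 2 = i) ∨
      (permSwap (permRev 0) = i ∨ permSwap (permRev 1) = i ∨ permSwap (permRev 2) = i) := by
    decide
  rcases key i with h | h | h | h
  · exact ⟨g, hg, by rcases h with rfl | rfl | rfl <;> simp [hi]⟩
  · refine ⟨_, hg.perm _ hr, ?_⟩
    rcases h with h | h | h <;> simp [h, hi]
  · refine ⟨_, hg.perm _ hs, ?_⟩
    rcases h with h | h | h <;> simp [h, hi]
  · refine ⟨_, (hg.perm _ hs).perm _ hr, ?_⟩
    rcases h with h | h | h <;> simp [h, hi]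

lemma matching_card {V : Type*} [Fintype V] [DecidableEq V] {G : SimpleGraph V}
    {M : Finset (Sym2 V)} (hM : IsMatchingE G M) : 2 * M.card ≤ Fintype.card V := by
  have h : (M.biUnion Sym2.toFinset).card = ∑ e ∈ M, e.toFinset.card := by
    apply Finset.card_biUnion
    intro e he f hf hne
    rw [Function.onFun, Finset.disjoint_left]
    intro v hv hv'
    exact hM.2 e he f hf hne v ⟨by simpa using hv, by simpa using hv'⟩
  have h2 : ∑ e ∈ M, e.toFinset.card = ∑ e ∈ M, 2 := by
    apply Finset.sum_congr rfl
    intro e he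
    exact Sym2.card_toFinset_of_not_isDiag e (G.not_isDiag_of_mem_edgeSet (hM.1 he))
  have h3 := Finset.card_le_univ (M.biUnion Sym2.toFinset)
  rw [h, h2] at h3
  simp at h3
  omega

lemma no_pair {V : Type*} [Fintype V] [DecidableEq V] {G : SimpleGraph V} (k : ℕ)
    (hk : Fintype.card V = 10 * k) (heq : 4 * gBeta G = 5 * gAlpha G)
    {H H' : Finset (Sym2 V)} (h : IsMatchingE G H) (h' : IsMatchingE G H') (hd : Disjoint H H')
    (h1 : 8 * k ≤ H.card + H'.card) (h2 : 4 * k < H.card) : False := by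
  have hb : gBeta G ≤ 5 * k := by
    apply csSup_le'
    rintro n ⟨M, hM, rfl⟩
    have := matching_card hM
    omega
  have ha : gAlpha G ≤ 4 * k := by omega
  have bdd : BddAbove {n | ∃ H H' : Finset (Sym2 V), IsMatchingE G H ∧ IsMatchingE G H' ∧
    Disjoint H H' ∧ H.card + H'.card = n} := by
    refine ⟨10 * k, ?_⟩
    rintro n ⟨M, M', hM, hM', -, rfl⟩
    have := matching_card hM
    have := matching_card hM'
    omega
  have bddA : ∀ {K K' : Finset (Sym2 V)}, IsMatchingE G K → IsMatchingE G K' → Disjoint K K' →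
      K.card + K'.card = gLam G → K.card ≤ gAlpha G := by
    intro K K' hK hK' hKd hKl
    refine le_csSup ⟨10 * k, ?_⟩ ⟨K, K', hK, hK', hKd, hKl, rfl⟩
    rintro n ⟨M, M', hM, hM', -, -, rfl⟩
    have := matching_card hM
    omega
  have hle : H.card + H'.card ≤ gLam G := le_csSup bdd ⟨H, H', h, h', hd, rfl⟩
  obtain ⟨K, K', hK, hK', hKd, hKl⟩ : gLam G ∈ {n | ∃ H H' : Finset (Sym2 V),
      IsMatchingE G H ∧ IsMatchingE G H' ∧ Disjoint H H' ∧ H.card + H'.card = n} :=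
    Nat.sSup_mem ⟨_, H, H', h, h', hd, rfl⟩ bdd
  have e1 := bddA hK hK' hKd hKl
  have e2 := bddA hK' hK hKd.symm (by omega)
  have e3 := bddA h h' hd (by omega)
  omega

/-- Matchings transported along an injection. -/
lemma map_matching {ι V : Type*} [DecidableEq V] {G : SimpleGraph V}
    (h : ι → V) (hinj : Function.Injective h) (M : Finset (Sym2 ι))
    (hG : ∀ e ∈ M, Sym2.map h e ∈ G.edgeSet)
    (hM : ∀ e ∈ M, ∀ f ∈ M, e ≠ f → ∀ v, ¬ (v ∈ e ∧ v ∈ f)) :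
    IsMatchingE G (M.image (Sym2.map h)) := by
  constructor
  · intro e he
    simp only [Finset.coe_image, Set.mem_image] at he
    obtain ⟨e, he, rfl⟩ := he
    exact hG e he
  · intro e he f hf hne v hv
    simp only [Finset.mem_image] at he hf
    obtain ⟨e, he, rfl⟩ := he
    obtain ⟨f, hf, rfl⟩ := hf
    simp only [Sym2.mem_map] at hv
    obtain ⟨⟨a, ha, rfl⟩, b, hb, hab⟩ := hv
    have := hinj hab
    subst this
    exact hM e he f hf (fun h => hne (by rw [h])) _ ⟨ha, hb⟩

/-- A finite set of edges on an index type is a matching. -/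
def LM {ι : Type*} (M : Finset (Sym2 ι)) : Prop :=
  ∀ e ∈ M, ∀ f ∈ M, e ≠ f → ∀ v ∈ e, v ∉ f

instance {ι : Type*} [DecidableEq ι] [Fintype ι] (M : Finset (Sym2 ι)) : Decidable (LM M) := by
  unfold LM; infer_instance

/-- Base matchings of the spanner. -/
def base1 : Finset (Sym2 (Fin 10)) := {s(0, 1), s(2, 3), s(5, 6), s(7, 8)}
/-- Base matchings of the spanner. -/
def base2 : Finset (Sym2 (Fin 10)) := {s(1, 2), s(3, 4), s(6, 7), s(8, 9)}

lemma base_out {V : Type*} [Fintype V] [DecidableEq V] {G F : SimpleGraph V} (hFG : F ≤ G)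
    [Fintype F.ConnectedComponent] [DecidableEq F.ConnectedComponent]
    (f : F.ConnectedComponent → Fin 10 → V) (hf : ∀ c, Lab F c (f c))
    (T : Finset F.ConnectedComponent) (B : Finset (Sym2 (Fin 10))) (hB : LM B) (h4 : B.card = 4)
    (hBs : B ⊆ spEdges) :
    let M := Tᶜ.biUnion (fun c => B.image (Sym2.map (f c)))
    IsMatchingE G M ∧ M.card = 4 * Tᶜ.card ∧
      ∀ e ∈ M, ∀ v ∈ e, F.connectedComponentMk v ∉ T := by
  have hm : ∀ c, IsMatchingE G (B.image (Sym2.map (f c))) := by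
    intro c
    apply map_matching _ (hf c).inj
    · intro e he
      have := hBs he
      induction e with | _ i j =>
      exact hFG (((hf c).adj i j).2 this)
    · intro e he f hf hne v hv
      exact hB e he f hf hne v hv.1 hv.2
  have hc : ∀ c, ∀ e ∈ B.image (Sym2.map (f c)), ∀ v ∈ e, F.connectedComponentMk v = c := by
    intro c e he v hv
    simp only [Finset.mem_image] at he
    obtain ⟨e, he, rfl⟩ := he
    rw [Sym2.mem_map] at hv
    obtain ⟨i, -, rfl⟩ := hv
    exact (hf c).comp i
  intro M
  refine ⟨⟨?_, ?_⟩, ?_, ?_⟩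
  · intro e he
    obtain ⟨c, -, he⟩ := Finset.mem_biUnion.1 he
    exact (hm c).1 he
  · intro e he e' he' hne v hv
    obtain ⟨c, -, he⟩ := Finset.mem_biUnion.1 he
    obtain ⟨d, -, he'⟩ := Finset.mem_biUnion.1 he'
    have : c = d := by rw [← hc c e he v hv.1, ← hc d e' he' v hv.2]
    subst this
    exact (hm c).2 e he e' he' hne v hv
  · rw [Finset.card_biUnion]
    · rw [Finset.sum_congr rfl (g := fun _ => 4)]
      · simp [mul_comm]
      · intro c _
        rw [Finset.card_image_of_injective _ (Sym2.map.injective (hf c).inj), h4]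
    · intro c _ d _ hcd
      rw [Function.onFun, Finset.disjoint_left]
      intro e he he'
      induction e with | _ i j =>
      exact hcd (by rw [← hc c _ he i (by simp), ← hc d _ he' i (by simp)])
  · intro e he v hv
    obtain ⟨c, hcT, he⟩ := Finset.mem_biUnion.1 he
    rw [hc c e he v hv]
    simpa using hcT

lemma union_matching {V : Type*} [DecidableEq V] {G F : SimpleGraph V}
    {T : Finset F.ConnectedComponent} {A M : Finset (Sym2 V)} (hA : IsMatchingE G A)
    (hM : IsMatchingE G M)
    (hAT : ∀ e ∈ A, ∀ v ∈ e, F.connectedComponentMk v ∈ T)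
    (hMT : ∀ e ∈ M, ∀ v ∈ e, F.connectedComponentMk v ∉ T) : IsMatchingE G (A ∪ M) := by
  refine ⟨?_, ?_⟩
  · intro e he
    rcases Finset.mem_union.1 he with h | h
    · exact hA.1 h
    · exact hM.1 h
  · intro e he f hf hne v hv
    rcases Finset.mem_union.1 he with h | h <;> rcases Finset.mem_union.1 hf with h' | h'
    · exact hA.2 e h f h' hne v hv
    · exact hMT f h' v hv.2 (hAT e h v hv.1)
    · exact hMT e h v hv.1 (hAT f h' v hv.2)
    · exact hM.2 e h f h' hne v hv

lemma disj_of_comp {V : Type*} {F : SimpleGraph V}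
    {T : Finset F.ConnectedComponent} {A M : Finset (Sym2 V)}
    (hAT : ∀ e ∈ A, ∀ v ∈ e, F.connectedComponentMk v ∈ T)
    (hMT : ∀ e ∈ M, ∀ v ∈ e, F.connectedComponentMk v ∉ T) : Disjoint A M := by
  rw [Finset.disjoint_left]
  intro e he he'
  induction e with | _ i j =>
  exact hMT _ he' i (by simp) (hAT _ he i (by simp))

/-- Local replacement lemma. -/
lemma local_contra {V : Type*} [Fintype V] [DecidableEq V] {G F : SimpleGraph V}
    (heq : 4 * gBeta G = 5 * gAlpha G) (hFG : F ≤ G) (hF : IsSForest F)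
    (T : Finset F.ConnectedComponent) {ι : Type*} [DecidableEq ι] (h : ι → V)
    (hinj : Function.Injective h)
    (hT : ∀ i, F.connectedComponentMk (h i) ∈ T) (A A' : Finset (Sym2 ι))
    (hA : LM A) (hA' : LM A') (hd : Disjoint A A')
    (hG : ∀ e ∈ A ∪ A', Sym2.map h e ∈ G.edgeSet)
    (h1 : 8 * T.card ≤ A.card + A'.card) (h2 : 4 * T.card < A.card) : False := by
  classical
  haveI : Fintype F.ConnectedComponent := Fintype.ofFinite _
  choose f hf using exists_lab hF
  have hcard : Fintype.card V = 10 * Fintype.card F.ConnectedComponent := by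
    let φ : F.ConnectedComponent × Fin 10 → V := fun p => f p.1 p.2
    have hφ : Function.Bijective φ := by
      constructor
      · rintro ⟨c, i⟩ ⟨d, j⟩ hcd
        have hcd' : f c i = f d j := hcd
        have : c = d := by rw [← (hf c).comp i, ← (hf d).comp j, hcd']
        subst this
        rw [(hf c).inj hcd']
      · intro v
        obtain ⟨i, hi⟩ := (hf (F.connectedComponentMk v)).surj v rfl
        exact ⟨⟨_, i⟩, hi⟩
    rw [← Fintype.card_of_bijective hφ]
    simp [mul_comm]
  have hTc : T.card + Tᶜ.card = Fintype.card F.ConnectedComponent := Finset.card_add_card_compl T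
  obtain ⟨m1, c1, t1⟩ := base_out hFG f hf T base1 (by decide +kernel) (by decide +kernel) (by decide +kernel)
  obtain ⟨m2, c2, t2⟩ := base_out hFG f hf T base2 (by decide +kernel) (by decide +kernel) (by decide +kernel)
  have mA : IsMatchingE G (A.image (Sym2.map h)) :=
    map_matching h hinj A (fun e he => hG e (Finset.mem_union_left _ he))
      (fun e he f hf hne v hv => hA e he f hf hne v hv.1 hv.2)
  have mA' : IsMatchingE G (A'.image (Sym2.map h)) :=
    map_matching h hinj A' (fun e he => hG e (Finset.mem_union_right _ he))
      (fun e he f hf hne v hv => hA' e he f hf hne v hv.1 hv.2)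
  have tt : ∀ A : Finset (Sym2 ι), ∀ e ∈ A.image (Sym2.map h), ∀ v ∈ e,
      F.connectedComponentMk v ∈ T := by
    intro A e he v hv
    simp only [Finset.mem_image] at he
    obtain ⟨e, he, rfl⟩ := he
    rw [Sym2.mem_map] at hv
    obtain ⟨i, -, rfl⟩ := hv
    exact hT i
  have cc : ∀ A : Finset (Sym2 ι), (A.image (Sym2.map h)).card = A.card := fun A =>
    Finset.card_image_of_injective _ (Sym2.map.injective hinj)
  refine no_pair _ hcard heq (union_matching mA m1 (tt A) t1) (union_matching mA' m2 (tt A') t2)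
    ?_ ?_ ?_
  · rw [Finset.disjoint_union_left, Finset.disjoint_union_right, Finset.disjoint_union_right]
    refine ⟨⟨?_, disj_of_comp (tt A) t2⟩, (disj_of_comp (tt A') t1).symm, ?_⟩
    · exact (Finset.disjoint_image (Sym2.map.injective hinj)).2 hd
    · rw [Finset.disjoint_biUnion_left]
      intro c hc
      rw [Finset.disjoint_biUnion_right]
      intro d hd
      by_cases hcd : c = d
      · subst hcd
        exact (Finset.disjoint_image (Sym2.map.injective (hf c).inj)).2 (by decide)
      · rw [Finset.disjoint_left]
        intro e he he'
        simp only [Finset.mem_image] at he he'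
        obtain ⟨e, he, rfl⟩ := he
        obtain ⟨e', he', hee⟩ := he'
        induction e with | _ i j =>
        have : f c i ∈ Sym2.map (f d) e' := by rw [hee]; simp
        rw [Sym2.mem_map] at this
        obtain ⟨l, -, hl⟩ := this
        exact hcd (by rw [← (hf c).comp i, ← (hf d).comp l, hl])
  · rw [Finset.card_union_of_disjoint (disj_of_comp (tt A) t1),
      Finset.card_union_of_disjoint (disj_of_comp (tt A') t2), cc, cc, c1, c2]
    omega
  · rw [Finset.card_union_of_disjoint (disj_of_comp (tt A) t1), cc, c1]
    omega

lemma one_comp {V : Type*} [Fintype V] [DecidableEq V] {G F : SimpleGraph V}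
    (heq : 4 * gBeta G = 5 * gAlpha G) (hFG : F ≤ G) (hF : IsSForest F)
    {c : F.ConnectedComponent} {g : Fin 10 → V} (hg : Lab F c g)
    (h02 : G.Adj (g 0) (g 2)) (x : Fin 10) (h1x : G.Adj (g 1) (g x)) : x = 0 ∨ x = 2 := by
  have hE : ∀ e ∈ insert s(0, 2) (insert s(1, x) spEdges), Sym2.map g e ∈ G.edgeSet := by
    intro e he
    simp only [Finset.mem_insert] at he
    rcases he with rfl | rfl | he
    · exact h02
    · exact h1x
    · induction e with | _ i j =>
      exact hFG ((hg.adj i j).2 he)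
  have main : ∀ A A' : Finset (Sym2 (Fin 10)), LM A → LM A' → Disjoint A A' →
      A ∪ A' ⊆ insert s(0, 2) (insert s(1, x) spEdges) → 8 ≤ A.card + A'.card → 4 < A.card →
      False := by
    intro A A' hA hA' hd hs h1 h2
    exact local_contra heq hFG hF {c} g hg.inj (by simp [hg.comp]) A A' hA hA' hd
      (fun e he => hE e (hs he)) (by simpa using h1) (by simpa using h2)
  fin_cases x
  · simp
  · exact absurd h1x (G.loopless.irrefl _)
  · simp
  · exact (main {s(4, 3), s(1, 0), s(2, 7), s(8, 9), s(5, 6)} {s(3, 1), s(0, 2), s(7, 8)}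
      (by decide +kernel) (by decide +kernel) (by decide +kernel) (by decide +kernel)
      (by decide +kernel) (by decide +kernel)).elim
  · exact (main {s(4, 3), s(1, 0), s(2, 7), s(8, 9), s(5, 6)} {s(4, 1), s(0, 2), s(7, 8)}
      (by decide +kernel) (by decide +kernel) (by decide +kernel) (by decide +kernel)
      (by decide +kernel) (by decide +kernel)).elim
  · exact (main {s(9, 8), s(7, 6), s(5, 1), s(0, 2), s(3, 4)} {s(8, 7), s(6, 5), s(1, 0), s(2, 3)}
      (by decide +kernel) (by decide +kernel) (by decide +kernel) (by decide +kernel)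
      (by decide +kernel) (by decide +kernel)).elim
  · exact (main {s(5, 6), s(1, 0), s(2, 7), s(8, 9), s(3, 4)} {s(6, 1), s(0, 2), s(7, 8)}
      (by decide +kernel) (by decide +kernel) (by decide +kernel) (by decide +kernel)
      (by decide +kernel) (by decide +kernel)).elim
  · exact (main {s(5, 6), s(7, 1), s(0, 2), s(3, 4), s(8, 9)} {s(6, 7), s(1, 0), s(2, 3)}
      (by decide +kernel) (by decide +kernel) (by decide +kernel) (by decide +kernel)
      (by decide +kernel) (by decide +kernel)).elim
  · exact (main {s(9, 8), s(1, 0), s(2, 7), s(6, 5), s(3, 4)} {s(8, 1), s(0, 2), s(7, 6)}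
      (by decide +kernel) (by decide +kernel) (by decide +kernel) (by decide +kernel)
      (by decide +kernel) (by decide +kernel)).elim
  · exact (main {s(5, 6), s(7, 8), s(9, 1), s(0, 2), s(3, 4)} {s(6, 7), s(8, 9), s(1, 0), s(2, 3)}
      (by decide +kernel) (by decide +kernel) (by decide +kernel) (by decide +kernel)
      (by decide +kernel) (by decide +kernel)).elim

/-- Inclusion of the first spanner. -/
def inA (i : Fin 10) : Fin 2 × Fin 10 := (0, i)
/-- Inclusion of the second spanner. -/
def inB (i : Fin 10) : Fin 2 × Fin 10 := (1, i)

lemma two_comp {V : Type*} [Fintype V] [DecidableEq V] {G F : SimpleGraph V}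
    (heq : 4 * gBeta G = 5 * gAlpha G) (hFG : F ≤ G) (hF : IsSForest F)
    {c d : F.ConnectedComponent} (hcd : c ≠ d) {g k : Fin 10 → V} (hg : Lab F c g)
    (hk : Lab F d k) (h02 : G.Adj (g 0) (g 2)) (x : Fin 10) (h1x : G.Adj (g 1) (k x))
    (hx : x = 0 ∨ x = 1 ∨ x = 2) : False := by
  classical
  let h : Fin 2 × Fin 10 → V := fun p => if p.1 = 0 then g p.2 else k p.2
  let T : Finset F.ConnectedComponent := {c, d}
  have hTc : T.card = 2 := Finset.card_pair hcd
  let E : Finset (Sym2 (Fin 2 × Fin 10)) := insert s(inA 0, inA 2) (insert s(inA 1, inB x)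
    (spEdges.image (Sym2.map inA) ∪ spEdges.image (Sym2.map inB)))
  have hA : ∀ i, h (inA i) = g i := fun i => by simp [h, inA]
  have hB : ∀ i, h (inB i) = k i := fun i => by simp [h, inB]
  have hE : ∀ e ∈ E, Sym2.map h e ∈ G.edgeSet := by
    intro e he
    simp only [E, Finset.mem_insert, Finset.mem_union, Finset.mem_image] at he
    rcases he with rfl | rfl | ⟨e, he, rfl⟩ | ⟨e, he, rfl⟩
    · simpa [hA] using h02
    · simpa [hA, hB] using h1x
    · induction e with | _ i j =>
      simpa [hA] using hFG ((hg.adj i j).2 he)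
    · induction e with | _ i j =>
      simpa [hB] using hFG ((hk.adj i j).2 he)
  have hne : ∀ i j, g i ≠ k j := by
    intro i j hij
    exact hcd (by rw [← hg.comp i, ← hk.comp j, hij])
  have two : ∀ p : Fin 2 × Fin 10, (∃ i, p = inA i) ∨ ∃ i, p = inB i := by
    rintro ⟨a, i⟩
    fin_cases a
    · exact Or.inl ⟨i, rfl⟩
    · exact Or.inr ⟨i, rfl⟩
  have hinj : Function.Injective h := by
    intro p q hpq
    rcases two p with ⟨i, rfl⟩ | ⟨i, rfl⟩ <;> rcases two q with ⟨j, rfl⟩ | ⟨j, rfl⟩ <;>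
      simp only [hA, hB] at hpq
    · rw [hg.inj hpq]
    · exact (hne _ _ hpq).elim
    · exact (hne _ _ hpq.symm).elim
    · rw [hk.inj hpq]
  have hT : ∀ i, F.connectedComponentMk (h i) ∈ T := by
    intro p
    rcases two p with ⟨i, rfl⟩ | ⟨i, rfl⟩
    · rw [hA, hg.comp]; simp [T]
    · rw [hB, hk.comp]; simp [T]
  have main : ∀ A A' : Finset (Sym2 (Fin 2 × Fin 10)), LM A → LM A' → Disjoint A A' →
      A ∪ A' ⊆ E → 16 ≤ A.card + A'.card → 8 < A.card → False := by
    intro A A' hA hA' hd hs h1 h2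
    exact local_contra heq hFG hF T h hinj hT A A' hA hA' hd
      (fun e he => hE e (hs he)) (by omega) (by omega)
  rcases hx with rfl | rfl | rfl
  · exact main {s(inB 4, inB 3), s(inB 2, inB 1), s(inB 0, inA 1), s(inA 0, inA 2),
        s(inA 3, inA 4), s(inA 5, inA 6), s(inA 7, inA 8), s(inB 5, inB 6), s(inB 7, inB 8)}
      {s(inB 3, inB 2), s(inB 1, inB 0), s(inA 1, inA 0), s(inA 2, inA 3),
        s(inA 6, inA 7), s(inA 8, inA 9), s(inB 6, inB 7), s(inB 8, inB 9)}
      (by decide +kernel) (by decide +kernel) (by decide +kernel) (by decide +kernel)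
      (by decide +kernel) (by decide +kernel)
  · exact main {s(inB 0, inB 1), s(inA 1, inA 0), s(inA 2, inA 3), s(inB 4, inB 3),
        s(inB 2, inB 7), s(inB 8, inB 9), s(inB 5, inB 6), s(inA 5, inA 6), s(inA 7, inA 8)}
      {s(inB 1, inA 1), s(inA 0, inA 2), s(inA 3, inA 4), s(inB 3, inB 2), s(inB 7, inB 8),
        s(inA 6, inA 7), s(inA 8, inA 9)}
      (by decide +kernel) (by decide +kernel) (by decide +kernel) (by decide +kernel)
      (by decide +kernel) (by decide +kernel)
  · exact main {s(inB 0, inB 1), s(inB 2, inA 1), s(inA 0, inA 2), s(inA 3, inA 4),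
        s(inB 3, inB 4), s(inA 5, inA 6), s(inA 7, inA 8), s(inB 5, inB 6), s(inB 7, inB 8)}
      {s(inB 1, inB 2), s(inA 1, inA 0), s(inA 2, inA 3), s(inA 6, inA 7), s(inA 8, inA 9),
        s(inB 6, inB 7), s(inB 8, inB 9)}
      (by decide +kernel) (by decide +kernel) (by decide +kernel) (by decide +kernel)
      (by decide +kernel) (by decide +kernel)

theorem stmt17 {V : Type*} [Fintype V] [DecidableEq V] (G F : SimpleGraph V)
    (hiso : ∀ x : V, ∃ y : V, G.Adj x y)
    (heq : 4 * gBeta G = 5 * gAlpha G)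
    (hFG : F ≤ G) (hF : IsSForest F) (u w v : V)
    (hu : fdeg F u = 1) (hw : IsBase F u w) (huw : G.Adj u w)
    (hvadj : F.Adj u v) (hv2 : fdeg F v = 2) :
    (∀ e ∈ BSet G F, v ∉ e) ∧ (∀ x : V, G.Adj v x → F.Adj v x) := by
  have key : ∀ x : V, G.Adj v x → F.Adj v x := by
    obtain ⟨g, hg, hgu⟩ := exists_lab_at hF u
    have hnb : ∀ y y', F.Adj u y → F.Adj u y' → y = y' := by
      obtain ⟨a, ha⟩ := Set.ncard_eq_one.1 hu
      intro y y' hy hy'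
      have h1 : y ∈ F.neighborSet u := hy
      have h2 : y' ∈ F.neighborSet u := hy'
      rw [ha] at h1 h2
      rw [h1, h2]
    have hg0 : g 0 = u := by
      rcases hgu with h | rfl | rfl
      · exact h
      · have := hg.inj (hnb (g 0) (g 2) ((hg.adj _ _).2 (by decide)) ((hg.adj _ _).2 (by decide)))
        exact absurd this (by decide)
      · have := hg.inj (hnb (g 1) (g 3) ((hg.adj _ _).2 (by decide)) ((hg.adj _ _).2 (by decide)))
        exact absurd this (by decide)
    have hg1 : g 1 = v := hnb _ _ (by rw [← hg0]; exact (hg.adj _ _).2 (by decide)) hvadj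
    have hadj_comp : ∀ {y z}, F.Adj y z → F.connectedComponentMk y = F.connectedComponentMk z :=
      fun h => SimpleGraph.ConnectedComponent.sound h.reachable
    have hg2 : g 2 = w := by
      have hne : F.dist u w ≠ 0 := by rw [hw.2]; decide
      have hr : F.Reachable u w := SimpleGraph.Reachable.of_dist_ne_zero hne
      obtain ⟨p, hp⟩ := hr.exists_walk_length_eq_dist
      rw [hw.2] at hp
      cases p with
      | nil => simp at hp
      | cons h q =>
        cases q with
        | nil => simp at hp
        | cons h' q' =>
          cases q' with
          | cons _ _ => simp at hp
          | nil =>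
            have e := hnb _ _ h hvadj
            subst e
            obtain ⟨j, rfl⟩ := hg.surj w (by rw [hadj_comp h, hadj_comp h'])
            rw [← hg1, hg.adj] at h'
            have : ∀ j : Fin 10, s(1, j) ∈ spEdges → j = 0 ∨ j = 2 := by decide
            rcases this j h' with rfl | rfl
            · exact absurd hg0.symm (fun h => huw.ne h)
            · rfl
    subst hg0 hg1 hg2
    intro x hx
    by_cases hc : F.connectedComponentMk x = F.connectedComponentMk (g 0)
    · obtain ⟨j, rfl⟩ := hg.surj x hc
      rcases one_comp heq hFG hF hg huw j hx with rfl | rfl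
      · exact (hg.adj _ _).2 (by decide)
      · exact (hg.adj _ _).2 (by decide)
    · obtain ⟨k, hk, hkx⟩ := exists_lab_at hF x
      exfalso
      rcases hkx with h | h | h
      · exact two_comp heq hFG hF (Ne.symm hc) hg hk huw 0 (by rw [h]; exact hx) (by simp)
      · exact two_comp heq hFG hF (Ne.symm hc) hg hk huw 1 (by rw [h]; exact hx) (by simp)
      · exact two_comp heq hFG hF (Ne.symm hc) hg hk huw 2 (by rw [h]; exact hx) (by simp)
  refine ⟨?_, key⟩
  intro e he hve
  obtain ⟨x, rfl⟩ := Sym2.mem_iff_exists.1 hve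
  have hx : F.Adj v x := key x he.1
  apply he.2
  left
  by_cases hU : s(v, x) ∈ USet F
  · exact Or.inl hU
  · exact Or.inr ⟨hx, hU, v, hve, hv2⟩
end

section
/- Let G be an S-graph with a spanning S-forest F having k connected components. Then β(G) = 5k and α(G) ≥ 4k; moreover, β(G)/α(G) = 5/4 (i.e., 4·β(G) = 5·α(G)) if and only if α(G) = 4k. -/
open SimpleGraph

/-- Twice the size of a matching is at most the number of vertices. -/
theorem matching_card_le {V : Type*} [Fintype V] [DecidableEq V] (G : SimpleGraph V)
    (M : Finset (Sym2 V)) (hM : IsMatchingE G M) : 2 * M.card ≤ Fintype.card V := by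
  have h1 : (M.biUnion fun e => e.toFinset).card = ∑ e ∈ M, e.toFinset.card := by
    apply Finset.card_biUnion
    intro e he f hf hef
    refine Finset.disjoint_left.2 ?_
    intro v hv hv'
    exact hM.2 e he f hf hef v ⟨Sym2.mem_toFinset.1 hv, Sym2.mem_toFinset.1 hv'⟩
  have h2 : ∑ e ∈ M, e.toFinset.card = ∑ e ∈ M, 2 :=
    Finset.sum_congr rfl fun e he =>
      Sym2.card_toFinset_of_not_isDiag e (G.not_isDiag_of_mem_edgeSet (hM.1 he))
  have h3 := Finset.card_le_univ (M.biUnion fun e => e.toFinset)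
  rw [h1, h2, Finset.sum_const, smul_eq_mul] at h3
  omega

/-- Copies of a set of edges of the spanner in all components. -/
noncomputable def liftE {V C : Type*} [Fintype C] [DecidableEq V] (f : C → Fin 10 → V)
    (N : Finset (Sym2 (Fin 10))) : Finset (Sym2 V) :=
  ((Finset.univ : Finset C) ×ˢ N).image fun p => p.2.map (f p.1)

theorem lift_common {V C : Type*} (f : C → Fin 10 → V)
    (hf : ∀ c i d j, f c i = f d j → c = d ∧ i = j) (c d : C) (e e' : Sym2 (Fin 10)) (v : V)
    (h : v ∈ e.map (f c)) (h' : v ∈ e'.map (f d)) : c = d ∧ ∃ i, i ∈ e ∧ i ∈ e' := by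
  obtain ⟨i, hi, rfl⟩ := Sym2.mem_map.1 h
  obtain ⟨j, hj, hij⟩ := Sym2.mem_map.1 h'
  obtain ⟨rfl, rfl⟩ := hf _ _ _ _ hij
  exact ⟨rfl, _, hi, hj⟩

theorem lift_inj {V C : Type*} (f : C → Fin 10 → V)
    (hf : ∀ c i d j, f c i = f d j → c = d ∧ i = j) (c d : C) (e e' : Sym2 (Fin 10))
    (h : e.map (f c) = e'.map (f d)) : c = d ∧ e = e' := by
  have hv : f c e.out.1 ∈ e.map (f c) := Sym2.mem_map.2 ⟨_, Sym2.out_fst_mem e, rfl⟩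
  obtain ⟨rfl, -⟩ := lift_common f hf c d e e' _ hv (h ▸ hv)
  exact ⟨rfl, Sym2.map.injective (fun i j hij => (hf _ _ _ _ hij).2) h⟩

theorem lift_card {V C : Type*} [Fintype C] [DecidableEq V] (f : C → Fin 10 → V)
    (hf : ∀ c i d j, f c i = f d j → c = d ∧ i = j) (N : Finset (Sym2 (Fin 10))) :
    (liftE f N).card = Fintype.card C * N.card := by
  unfold liftE
  rw [Finset.card_image_of_injective, Finset.card_product, Finset.card_univ]
  rintro ⟨c, e⟩ ⟨d, e'⟩ h
  obtain ⟨rfl, rfl⟩ := lift_inj f hf c d e e' h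
  rfl

theorem lift_disjoint {V C : Type*} [Fintype C] [DecidableEq V] (f : C → Fin 10 → V)
    (hf : ∀ c i d j, f c i = f d j → c = d ∧ i = j) (N N' : Finset (Sym2 (Fin 10)))
    (h : Disjoint N N') : Disjoint (liftE f N) (liftE f N') := by
  rw [Finset.disjoint_left]
  intro x hx hx'
  obtain ⟨⟨c, e⟩, he, rfl⟩ := Finset.mem_image.1 hx
  obtain ⟨⟨d, e'⟩, he', hee⟩ := Finset.mem_image.1 hx'
  obtain ⟨rfl, rfl⟩ := lift_inj f hf d c e' e hee
  exact Finset.disjoint_left.1 h (Finset.mem_product.1 he).2 (Finset.mem_product.1 he').2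

theorem lift_matching {V C : Type*} [Fintype C] [DecidableEq V] (G : SimpleGraph V)
    (f : C → Fin 10 → V) (hf : ∀ c i d j, f c i = f d j → c = d ∧ i = j)
    (hG : ∀ c i j, Spanner10.Adj i j → G.Adj (f c i) (f c j))
    (N : Finset (Sym2 (Fin 10))) (hN : IsMatchingE Spanner10 N) :
    IsMatchingE G (liftE f N) := by
  constructor
  · intro x hx
    obtain ⟨⟨c, e⟩, he, rfl⟩ := Finset.mem_image.1 hx
    have h1 := hN.1 (Finset.mem_product.1 he).2
    induction e with
    | h i j => exact hG c i j h1
  · intro x hx y hy hxy v hv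
    obtain ⟨⟨c, e⟩, he, rfl⟩ := Finset.mem_image.1 hx
    obtain ⟨⟨d, e'⟩, he', rfl⟩ := Finset.mem_image.1 hy
    obtain ⟨rfl, i, hi, hi'⟩ := lift_common f hf c d e e' v hv.1 hv.2
    refine hN.2 e (Finset.mem_product.1 he).2 e' (Finset.mem_product.1 he').2 ?_ i ⟨hi, hi'⟩
    rintro rfl
    exact hxy rfl

set_option maxRecDepth 100000 in
theorem spanner_perfect :
    IsMatchingE Spanner10 {s(0, 1), s(3, 4), s(5, 6), s(8, 9), s(2, 7)} := by
  refine ⟨?_, by decide⟩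
  intro e he
  simp at he
  rcases he with rfl | rfl | rfl | rfl | rfl <;> simp [Spanner10]

set_option maxRecDepth 100000 in
theorem spanner_left :
    IsMatchingE Spanner10 {s(0, 1), s(2, 3), s(5, 6), s(7, 8)} := by
  refine ⟨?_, by decide⟩
  intro e he
  simp at he
  rcases he with rfl | rfl | rfl | rfl <;> simp [Spanner10]

set_option maxRecDepth 100000 in
theorem spanner_right :
    IsMatchingE Spanner10 {s(1, 2), s(3, 4), s(6, 7), s(8, 9)} := by
  refine ⟨?_, by decide⟩
  intro e he
  simp at he
  rcases he with rfl | rfl | rfl | rfl <;> simp [Spanner10]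

/-- if `G` is an S-graph with a spanning S-forest `F` having `k` connected
components, then `β(G) = 5k`, `α(G) ≥ 4k`, and `β(G)/α(G) = 5/4` iff `α(G) = 4k`. -/
theorem stmt19 {V : Type*} [Fintype V] [DecidableEq V] (G F : SimpleGraph V)
    (hFG : F ≤ G) (hF : IsSForest F) (k : ℕ)
    (hk : Nat.card F.ConnectedComponent = k) :
    gBeta G = 5 * k ∧ 4 * k ≤ gAlpha G ∧
    (4 * gBeta G = 5 * gAlpha G ↔ gAlpha G = 4 * k) := by
  classical
  have φ : ∀ c : F.ConnectedComponent, (F.induce c.supp) ≃g Spanner10 :=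
    fun c => Classical.choice (hF c)
  let f : F.ConnectedComponent → Fin 10 → V := fun c i => ((φ c).symm i).1
  have hfc : ∀ c i, F.connectedComponentMk (f c i) = c := fun c i => ((φ c).symm i).2
  have hf : ∀ c i d j, f c i = f d j → c = d ∧ i = j := by
    intro c i d j h
    have hcd : c = d := by rw [← hfc c i, h, hfc]
    subst hcd
    exact ⟨rfl, (φ c).symm.injective (Subtype.ext h)⟩
  have hG : ∀ c i j, Spanner10.Adj i j → G.Adj (f c i) (f c j) := by
    intro c i j h
    exact hFG ((φ c).symm.map_adj_iff.2 h)
  have : Fintype F.ConnectedComponent := Fintype.ofFinite _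
  rw [Nat.card_eq_fintype_card] at hk
  have hV : Fintype.card V = 10 * k := by
    have hb : Function.Bijective (fun p : F.ConnectedComponent × Fin 10 => f p.1 p.2) := by
      constructor
      · rintro ⟨c, i⟩ ⟨d, j⟩ h
        obtain ⟨rfl, rfl⟩ := hf c i d j h
        rfl
      · intro v
        refine ⟨⟨F.connectedComponentMk v, φ _ ⟨v, rfl⟩⟩, ?_⟩
        simp [f]
    rw [← Fintype.card_of_bijective hb, Fintype.card_prod, hk, Fintype.card_fin, mul_comm]
  have hbd : ∀ M, IsMatchingE G M → M.card ≤ 5 * k := by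
    intro M hM
    have := matching_card_le G M hM
    omega
  have hbeta : gBeta G = 5 * k := by
    apply IsGreatest.csSup_eq
    refine ⟨⟨_, lift_matching G f hf hG _ spanner_perfect, ?_⟩, ?_⟩
    · rw [lift_card f hf, hk, mul_comm]
      rfl
    · rintro n ⟨M, hM, rfl⟩
      exact hbd M hM
  have hbl : BddAbove {n | ∃ H H' : Finset (Sym2 V), IsMatchingE G H ∧ IsMatchingE G H' ∧
      Disjoint H H' ∧ H.card + H'.card = n} := by
    refine ⟨10 * k, ?_⟩
    rintro n ⟨H, H', h, h', -, rfl⟩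
    have := hbd H h
    have := hbd H' h'
    omega
  have hmem : k * 4 + k * 4 ∈ {n | ∃ H H' : Finset (Sym2 V), IsMatchingE G H ∧
      IsMatchingE G H' ∧ Disjoint H H' ∧ H.card + H'.card = n} := by
    refine ⟨_, _, lift_matching G f hf hG _ spanner_left,
      lift_matching G f hf hG _ spanner_right, lift_disjoint f hf _ _ (by decide), ?_⟩
    rw [lift_card f hf, lift_card f hf, hk]
    rfl
  have hlam : k * 4 + k * 4 ≤ gLam G := le_csSup hbl hmem
  obtain ⟨H, H', h1, h2, h3, h4⟩ : ∃ H H' : Finset (Sym2 V), IsMatchingE G H ∧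
      IsMatchingE G H' ∧ Disjoint H H' ∧ H.card + H'.card = gLam G := Nat.sSup_mem ⟨_, hmem⟩ hbl
  have hba : BddAbove {n | ∃ H H' : Finset (Sym2 V), IsMatchingE G H ∧ IsMatchingE G H' ∧
      Disjoint H H' ∧ H.card + H'.card = gLam G ∧ H.card = n} := by
    refine ⟨5 * k, ?_⟩
    rintro n ⟨H, H', h, -, -, -, rfl⟩
    exact hbd H h
  have ha1 : H.card ≤ gAlpha G := le_csSup hba ⟨H, H', h1, h2, h3, h4, rfl⟩
  have ha2 : H'.card ≤ gAlpha G :=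
    le_csSup hba ⟨H', H, h2, h1, h3.symm, by omega, rfl⟩
  omega
end
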